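/- Let d ≥ 1, m > 0 and Λ ≠ 0 be real. Let S : ℝ × ℝ^d → ℝ and P : ℝ × ℝ^d → (0,∞) be C² functions and U : ℝ^d → ℝ. Define ψ = √P · exp(i·S/(m·Λ)). Then at every point (t,x), the linear Schrödinger equation i·m·Λ·∂ψ/∂t + (m·Λ²/2)·Δψ − U·ψ = 0 holds if and only if both real equations hold: (i) ∂S/∂t + |∇S|²/(2m) − (m·Λ²/2)·(Δ√P)/√P + U = 0, and (ii) the continuity equation ∂P/∂t + div(P·∇S/m) = 0. -/

import Mathlib

noncomputable section

variable {d : ℕ} {F : Type*} [NormedAddCommGroup F] [NormedSpace ℝ F]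

/-- Spatial partial derivative in the `k`-th coordinate of a function on `ℝ × ℝ^d`. -/
def pd (k : Fin d) (f : ℝ × (Fin d → ℝ) → F) : ℝ × (Fin d → ℝ) → F :=
  fun p => fderiv ℝ (fun y => f (p.1, y)) p.2 (Pi.single k 1)

/-- Time derivative of a function on `ℝ × ℝ^d`. -/
def tdiff (f : ℝ × (Fin d → ℝ) → F) : ℝ × (Fin d → ℝ) → F :=
  fun p => deriv (fun s => f (s, p.2)) p.1

/-- Spatial Laplacian of a function on `ℝ × ℝ^d`. -/
def lap (f : ℝ × (Fin d → ℝ) → F) : ℝ × (Fin d → ℝ) → F :=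
  fun p => ∑ k : Fin d, pd k (pd k f) p

/-!
Write `R = √P`, so that `ψ = R · exp(i·S/K)` with `K = m·Λ`. The product rule for the Laplacian and
`Δ(exp φ) = exp φ · (Δφ + ∑ₖ (∂ₖφ)²)` give

  `Δψ = ((ΔR - R|∇S|²/K²) + i(2∇R·∇S + RΔS)/K) · exp(i·S/K)`.

Dividing the Schrödinger equation by the nowhere vanishing phase factor leaves a complex number
whose real part is `-R` times the Hamilton–Jacobi expression and whose imaginary part is `K` times
`∂R/∂t + (2∇R·∇S + RΔS)/(2m)`; since `P = R²`, the latter is the continuity expression over `2R`.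
-/

open Complex Filter Topology

section SpatialDerivatives

variable {G : Type*} [NormedAddCommGroup G] [NormedSpace ℝ G]
  {A : Type*} [NormedRing A] [NormedAlgebra ℝ A]
  {t : ℝ} {x : Fin d → ℝ}

theorem pd_congr_of_eventuallyEq {f g : ℝ × (Fin d → ℝ) → F}
    (h : ∀ᶠ y in 𝓝 x, f (t, y) = g (t, y)) (k : Fin d) : pd k f (t, x) = pd k g (t, x) :=
  DFunLike.congr_fun (EventuallyEq.fderiv_eq h) (Pi.single k 1)

theorem differentiableAt_pd {f : ℝ × (Fin d → ℝ) → F}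
    (hf : ContDiffAt ℝ 2 (fun y => f (t, y)) x) (k : Fin d) :
    DifferentiableAt ℝ (fun y => pd k f (t, y)) x :=
  ((hf.fderiv_right (m := 1) (by norm_num)).differentiableAt one_ne_zero).clm_apply
    (differentiableAt_const _)

theorem eventually_differentiableAt_of_contDiffAt_two {f : ℝ × (Fin d → ℝ) → F}
    (hf : ContDiffAt ℝ 2 (fun y => f (t, y)) x) :
    ∀ᶠ y in 𝓝 x, DifferentiableAt ℝ (fun z => f (t, z)) y :=
  (hf.eventually (by simp)).mono fun _ hy => hy.differentiableAt two_ne_zero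

theorem pd_continuousLinearMap_comp (L : F →L[ℝ] G) {f : ℝ × (Fin d → ℝ) → F}
    (hf : DifferentiableAt ℝ (fun y => f (t, y)) x) (k : Fin d) :
    pd k (fun p => L (f p)) (t, x) = L (pd k f (t, x)) :=
  DFunLike.congr_fun (L.hasFDerivAt.comp x hf.hasFDerivAt).fderiv (Pi.single k 1)

theorem lap_continuousLinearMap_comp (L : F →L[ℝ] G) {f : ℝ × (Fin d → ℝ) → F}
    (hf : ContDiffAt ℝ 2 (fun y => f (t, y)) x) :
    lap (fun p => L (f p)) (t, x) = L (lap f (t, x)) := by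
  have second_pd (k : Fin d) :
      pd k (pd k fun p => L (f p)) (t, x) = L (pd k (pd k f) (t, x)) := by
    rw [← pd_continuousLinearMap_comp L (differentiableAt_pd hf k)]
    exact pd_congr_of_eventuallyEq ((eventually_differentiableAt_of_contDiffAt_two hf).mono
      fun _ hy => pd_continuousLinearMap_comp L hy k) k
  simp only [lap, second_pd, map_sum]

theorem pd_mul {f g : ℝ × (Fin d → ℝ) → A} (hf : DifferentiableAt ℝ (fun y => f (t, y)) x)
    (hg : DifferentiableAt ℝ (fun y => g (t, y)) x) (k : Fin d) :
    pd k (fun p => f p * g p) (t, x) = pd k f (t, x) * g (t, x) + f (t, x) * pd k g (t, x) := by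
  refine (DFunLike.congr_fun (hf.hasFDerivAt.mul' hg.hasFDerivAt).fderiv (Pi.single k 1)).trans ?_
  simp [pd, add_comm]

theorem lap_mul {f g : ℝ × (Fin d → ℝ) → A} (hf : ContDiffAt ℝ 2 (fun y => f (t, y)) x)
    (hg : ContDiffAt ℝ 2 (fun y => g (t, y)) x) :
    lap (fun p => f p * g p) (t, x) =
      lap f (t, x) * g (t, x) + 2 * ∑ k, pd k f (t, x) * pd k g (t, x)
        + f (t, x) * lap g (t, x) := by
  have hf' := eventually_differentiableAt_of_contDiffAt_two hf
  have hg' := eventually_differentiableAt_of_contDiffAt_two hg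
  have second_pd (k : Fin d) : pd k (pd k fun p => f p * g p) (t, x) =
      pd k (pd k f) (t, x) * g (t, x) + 2 * (pd k f (t, x) * pd k g (t, x))
        + f (t, x) * pd k (pd k g) (t, x) := by
    have hfg := differentiableAt_pd hf k |>.mul hg'.self_of_nhds
    have hgf := hf'.self_of_nhds.mul (differentiableAt_pd hg k)
    calc pd k (pd k fun p => f p * g p) (t, x)
        = pd k (fun p => pd k f p * g p + f p * pd k g p) (t, x) :=
          pd_congr_of_eventuallyEq (hf'.mp <| hg'.mono fun _ hgy hfy => pd_mul hfy hgy k) k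
      _ = pd k (fun p => pd k f p * g p) (t, x) + pd k (fun p => f p * pd k g p) (t, x) :=
          DFunLike.congr_fun (fderiv_add hfg hgf) (Pi.single k 1)
      _ = _ := by
          rw [pd_mul (differentiableAt_pd hf k) hg'.self_of_nhds,
            pd_mul hf'.self_of_nhds (differentiableAt_pd hg k)]
          noncomm_ring
  simp only [lap, second_pd, Finset.sum_add_distrib, Finset.sum_mul, Finset.mul_sum]

theorem pd_cexp {f : ℝ × (Fin d → ℝ) → ℂ} (hf : DifferentiableAt ℝ (fun y => f (t, y)) x)
    (k : Fin d) :
    pd k (fun p => exp (f p)) (t, x) = exp (f (t, x)) * pd k f (t, x) :=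
  DFunLike.congr_fun hf.hasFDerivAt.cexp.fderiv (Pi.single k 1)

theorem lap_cexp {f : ℝ × (Fin d → ℝ) → ℂ} (hf : ContDiffAt ℝ 2 (fun y => f (t, y)) x) :
    lap (fun p => exp (f p)) (t, x) =
      exp (f (t, x)) * (lap f (t, x) + ∑ k, pd k f (t, x) ^ 2) := by
  have hf' := eventually_differentiableAt_of_contDiffAt_two hf
  have second_pd (k : Fin d) : pd k (pd k fun p => exp (f p)) (t, x) =
      exp (f (t, x)) * (pd k (pd k f) (t, x) + pd k f (t, x) ^ 2) := by
    rw [pd_congr_of_eventuallyEq (g := fun p => exp (f p) * pd k f p)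
        (hf'.mono fun _ hy => pd_cexp hy k) k,
      pd_mul hf'.self_of_nhds.cexp (differentiableAt_pd hf k), pd_cexp hf'.self_of_nhds]
    ring
  simp only [lap, second_pd, ← Finset.mul_sum, Finset.sum_add_distrib]

theorem pd_ofReal {f : ℝ × (Fin d → ℝ) → ℝ} (hf : DifferentiableAt ℝ (fun y => f (t, y)) x)
    (k : Fin d) : pd k (fun p => (f p : ℂ)) (t, x) = (pd k f (t, x) : ℝ) :=
  pd_continuousLinearMap_comp ofRealCLM hf k

theorem lap_ofReal {f : ℝ × (Fin d → ℝ) → ℝ} (hf : ContDiffAt ℝ 2 (fun y => f (t, y)) x) :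
    lap (fun p => (f p : ℂ)) (t, x) = (lap f (t, x) : ℝ) :=
  lap_continuousLinearMap_comp ofRealCLM hf

theorem pd_cexp_const_mul_ofReal {f : ℝ × (Fin d → ℝ) → ℝ}
    (hf : DifferentiableAt ℝ (fun y => f (t, y)) x) (c : ℂ) (k : Fin d) :
    pd k (fun p => exp (c * f p)) (t, x) = exp (c * f (t, x)) * (c * (pd k f (t, x) : ℝ)) :=
  let L : ℝ →L[ℝ] ℂ := c • ofRealCLM
  (pd_cexp (f := fun p => L (f p)) (L.differentiableAt.comp x hf) k).trans
    (congrArg _ (pd_continuousLinearMap_comp L hf k))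

theorem lap_cexp_const_mul_ofReal {f : ℝ × (Fin d → ℝ) → ℝ}
    (hf : ContDiffAt ℝ 2 (fun y => f (t, y)) x) (c : ℂ) :
    lap (fun p => exp (c * f p)) (t, x) =
      exp (c * f (t, x)) * (c * (lap f (t, x) : ℝ) + c ^ 2 * (∑ k, pd k f (t, x) ^ 2 : ℝ)) := by
  let L : ℝ →L[ℝ] ℂ := c • ofRealCLM
  have pd_exponent (k : Fin d) :
      pd k (fun p => c * (f p : ℂ)) (t, x) = c * (pd k f (t, x) : ℝ) :=
    pd_continuousLinearMap_comp L (hf.differentiableAt two_ne_zero) k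
  have lap_exponent : lap (fun p => c * (f p : ℂ)) (t, x) = c * (lap f (t, x) : ℝ) :=
    lap_continuousLinearMap_comp L hf
  rw [lap_cexp (contDiffAt_const.mul (ofRealCLM.contDiff.contDiffAt.comp x hf)), lap_exponent]
  simp only [pd_exponent, mul_pow, ofReal_sum, ofReal_pow, Finset.mul_sum]

theorem pd_sqrt {P : ℝ × (Fin d → ℝ) → ℝ} (hP : DifferentiableAt ℝ (fun y => P (t, y)) x)
    (h0 : P (t, x) ≠ 0) (k : Fin d) :
    pd k (fun p => √(P p)) (t, x) = pd k P (t, x) / (2 * √(P (t, x))) := by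
  refine (DFunLike.congr_fun (hP.hasFDerivAt.sqrt h0).fderiv (Pi.single k 1)).trans ?_
  simp [pd, div_eq_inv_mul]

theorem sum_pd_mul_pd_div {P S : ℝ × (Fin d → ℝ) → ℝ}
    (hP : DifferentiableAt ℝ (fun y => P (t, y)) x)
    (hS : ContDiffAt ℝ 2 (fun y => S (t, y)) x) (m : ℝ) :
    ∑ k, pd k (fun p => P p * pd k S p / m) (t, x) =
      (∑ k, pd k P (t, x) * pd k S (t, x) + P (t, x) * lap S (t, x)) / m := by
  have pd_flux (k : Fin d) : pd k (fun p => P p * pd k S p / m) (t, x) =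
      (pd k P (t, x) * pd k S (t, x) + P (t, x) * pd k (pd k S) (t, x)) / m := by
    have hPS := hP.mul (differentiableAt_pd hS k)
    have h := pd_continuousLinearMap_comp (m⁻¹ • ContinuousLinearMap.id ℝ ℝ)
      (f := fun p => P p * pd k S p) hPS k
    rw [pd_mul hP (differentiableAt_pd hS k)] at h
    simpa [div_eq_inv_mul] using h
  simp only [pd_flux, lap, ← Finset.sum_div, Finset.sum_add_distrib, Finset.mul_sum]

end SpatialDerivatives

/-- The wave function `R · exp(i·S/K)` with real amplitude `R` and phase `S/K`; the change of
variable of the theorem is the case `R = √P`, `K = m·Λ`. -/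
def polarWave (K : ℝ) (R S : ℝ × (Fin d → ℝ) → ℝ) : ℝ × (Fin d → ℝ) → ℂ :=
  fun p => R p * exp (I * S p / K)

section PolarWave

variable {R S : ℝ × (Fin d → ℝ) → ℝ} {t : ℝ} {x : Fin d → ℝ}

theorem tdiff_polarWave (hR : DifferentiableAt ℝ (fun s => R (s, x)) t)
    (hS : DifferentiableAt ℝ (fun s => S (s, x)) t) (K : ℝ) :
    tdiff (polarWave K R S) (t, x) =
      (tdiff R (t, x) + I * (R (t, x) * tdiff S (t, x) / K)) * exp (I * S (t, x) / K) := by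
  have hphase := ((hS.hasDerivAt.ofReal_comp.const_mul I).div_const (K : ℂ)).cexp
  refine (hR.hasDerivAt.ofReal_comp.mul hphase).deriv.trans ?_
  simp only [tdiff]
  ring

theorem lap_polarWave (hR : ContDiffAt ℝ 2 (fun y => R (t, y)) x)
    (hS : ContDiffAt ℝ 2 (fun y => S (t, y)) x) (K : ℝ) :
    lap (polarWave K R S) (t, x) =
      (lap R (t, x) - R (t, x) * (∑ k, pd k S (t, x) ^ 2 : ℝ) / K ^ 2
        + I * ((2 * (∑ k, pd k R (t, x) * pd k S (t, x) : ℝ) + R (t, x) * lap S (t, x)) / K))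
        * exp (I * S (t, x) / K) := by
  have hR1 : DifferentiableAt ℝ (fun y => R (t, y)) x := hR.differentiableAt two_ne_zero
  have hS1 : DifferentiableAt ℝ (fun y => S (t, y)) x := hS.differentiableAt two_ne_zero
  have hRc : ContDiffAt ℝ 2 (fun y => (R (t, y) : ℂ)) x :=
    ofRealCLM.contDiff.contDiffAt.comp x hR
  have hphase : ContDiffAt ℝ 2 (fun y => exp (I / K * S (t, y))) x :=
    (contDiffAt_const.mul (ofRealCLM.contDiff.contDiffAt.comp x hS)).cexp
  have hcross : ∑ k, pd k (fun p => (R p : ℂ)) (t, x)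
        * pd k (fun p => exp (I / K * S p)) (t, x) =
      I / K * (∑ k, pd k R (t, x) * pd k S (t, x) : ℝ) * exp (I / K * S (t, x)) := by
    simp only [pd_ofReal hR1, pd_cexp_const_mul_ofReal hS1, ofReal_sum, ofReal_mul,
      Finset.mul_sum, Finset.sum_mul]
    exact Finset.sum_congr rfl fun k _ => by ring
  unfold polarWave
  simp only [mul_div_right_comm I]
  rw [lap_mul hRc hphase, hcross, lap_ofReal hR, lap_cexp_const_mul_ofReal hS, div_pow, I_sq]
  ring

theorem schrodinger_polarWave_iff (hRt : DifferentiableAt ℝ (fun s => R (s, x)) t)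
    (hRx : ContDiffAt ℝ 2 (fun y => R (t, y)) x)
    (hSt : DifferentiableAt ℝ (fun s => S (s, x)) t)
    (hSx : ContDiffAt ℝ 2 (fun y => S (t, y)) x)
    {m Λ : ℝ} (hm : m ≠ 0) (hΛ : Λ ≠ 0) (u : ℝ) :
    I * m * Λ * tdiff (polarWave (m * Λ) R S) (t, x)
        + (m * Λ ^ 2 / 2) * lap (polarWave (m * Λ) R S) (t, x)
        - u * polarWave (m * Λ) R S (t, x) = 0 ↔
      R (t, x) * (tdiff S (t, x) + (∑ k, pd k S (t, x) ^ 2) / (2 * m) + u)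
          - m * Λ ^ 2 / 2 * lap R (t, x) = 0 ∧
        tdiff R (t, x)
          + (2 * ∑ k, pd k R (t, x) * pd k S (t, x) + R (t, x) * lap S (t, x)) / (2 * m) = 0 := by
  set hamiltonJacobi := R (t, x) * (tdiff S (t, x) + (∑ k, pd k S (t, x) ^ 2) / (2 * m) + u)
    - m * Λ ^ 2 / 2 * lap R (t, x) with hHJ
  set transport := tdiff R (t, x)
    + (2 * ∑ k, pd k R (t, x) * pd k S (t, x) + R (t, x) * lap S (t, x)) / (2 * m) with hTr
  have factorization : I * m * Λ * tdiff (polarWave (m * Λ) R S) (t, x)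
        + (m * Λ ^ 2 / 2) * lap (polarWave (m * Λ) R S) (t, x)
        - u * polarWave (m * Λ) R S (t, x) =
      ((-hamiltonJacobi : ℝ) + (m * Λ * transport : ℝ) * I)
        * exp (I * S (t, x) / (m * Λ : ℝ)) := by
    rw [tdiff_polarWave hRt hSt, lap_polarWave hRx hSx, polarWave, hHJ, hTr]
    have hmc : (m : ℂ) ≠ 0 := ofReal_ne_zero.mpr hm
    have hΛc : (Λ : ℂ) ≠ 0 := ofReal_ne_zero.mpr hΛ
    push_cast
    field_simp
    linear_combination (2 * (m : ℂ) * R (t, x) * (tdiff S (t, x) : ℝ)) * I_sq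
  rw [factorization, mul_eq_zero, or_iff_left (exp_ne_zero _)]
  simp [Complex.ext_iff, hm, hΛ]

end PolarWave

theorem continuity_eq_two_mul_sqrt_mul {P S : ℝ × (Fin d → ℝ) → ℝ} {t : ℝ} {x : Fin d → ℝ}
    (hPt : DifferentiableAt ℝ (fun s => P (s, x)) t)
    (hPx : DifferentiableAt ℝ (fun y => P (t, y)) x)
    (hSx : ContDiffAt ℝ 2 (fun y => S (t, y)) x) (hP : 0 < P (t, x)) (m : ℝ) :
    tdiff P (t, x) + ∑ k, pd k (fun p => P p * pd k S p / m) (t, x) =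
      2 * √(P (t, x)) * (tdiff (fun p => √(P p)) (t, x)
        + (2 * ∑ k, pd k (fun p => √(P p)) (t, x) * pd k S (t, x)
            + √(P (t, x)) * lap S (t, x)) / (2 * m)) := by
  have htime : tdiff (fun p => √(P p)) (t, x) = tdiff P (t, x) / (2 * √(P (t, x))) :=
    deriv_sqrt hPt hP.ne'
  have hsqrt : √(P (t, x)) ≠ 0 := (Real.sqrt_pos.mpr hP).ne'
  rw [htime, sum_pd_mul_pd_div hPx hSx]
  simp only [pd_sqrt hPx hP.ne', div_mul_eq_mul_div, ← Finset.sum_div]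
  field_simp
  rw [Real.sq_sqrt hP.le, mul_comm (lap S (t, x))]

theorem linear_schrodinger_iff_real_system_general {m Λ : ℝ} (hm : m ≠ 0) (hΛ : Λ ≠ 0)
    {S P : ℝ × (Fin d → ℝ) → ℝ} {t : ℝ} {x : Fin d → ℝ}
    (hSt : DifferentiableAt ℝ (fun s => S (s, x)) t)
    (hSx : ContDiffAt ℝ 2 (fun y => S (t, y)) x)
    (hPt : DifferentiableAt ℝ (fun s => P (s, x)) t)
    (hPx : ContDiffAt ℝ 2 (fun y => P (t, y)) x) (hP : 0 < P (t, x)) (u : ℝ) :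
    (I * m * Λ * tdiff (polarWave (m * Λ) (fun p => √(P p)) S) (t, x)
        + (m * Λ ^ 2 / 2) * lap (polarWave (m * Λ) (fun p => √(P p)) S) (t, x)
        - u * polarWave (m * Λ) (fun p => √(P p)) S (t, x) = 0) ↔
      (tdiff S (t, x) + (∑ k, pd k S (t, x) ^ 2) / (2 * m)
          - (m * Λ ^ 2 / 2) * (lap (fun p => √(P p)) (t, x) / √(P (t, x))) + u = 0
        ∧ tdiff P (t, x) + ∑ k, pd k (fun p => P p * pd k S p / m) (t, x) = 0) := by
  have hsqrt : √(P (t, x)) ≠ 0 := (Real.sqrt_pos.mpr hP).ne'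
  rw [schrodinger_polarWave_iff (hPt.sqrt hP.ne') (hPx.sqrt hP.ne') hSt hSx hm hΛ,
    continuity_eq_two_mul_sqrt_mul hPt (hPx.differentiableAt two_ne_zero) hSx hP,
    mul_eq_zero_iff_left (mul_ne_zero two_ne_zero hsqrt)]
  refine and_congr_left' ?_
  rw [← mul_eq_zero_iff_left hsqrt (b := tdiff S (t, x) + _ - _ + u)]
  field_simp
  ring_nf

/-- With `ψ = √P · exp(i·S/(m·Λ))`, the linear Schrödinger equation is equivalent
to the Hamilton–Jacobi equation with extra potential together with the continuity
equation. -/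
theorem linear_schrodinger_iff_real_system
    (d : ℕ) (hd : 1 ≤ d) (m Λ : ℝ) (hm : 0 < m) (hΛ : Λ ≠ 0)
    (S P : ℝ × (Fin d → ℝ) → ℝ) (hS : ContDiff ℝ 2 S) (hP : ContDiff ℝ 2 P)
    (hPpos : ∀ p, 0 < P p)
    (U : (Fin d → ℝ) → ℝ)
    (ψ : ℝ × (Fin d → ℝ) → ℂ)
    (hψ : ψ = fun p =>
      (Real.sqrt (P p) : ℂ) * Complex.exp (Complex.I * (S p : ℂ) / ((m : ℂ) * (Λ : ℂ))))
    (t : ℝ) (x : Fin d → ℝ) :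
    (Complex.I * (m : ℂ) * (Λ : ℂ) * tdiff ψ (t, x)
        + ((m : ℂ) * (Λ : ℂ) ^ 2 / 2) * lap ψ (t, x)
        - (U x : ℂ) * ψ (t, x) = 0) ↔
      (tdiff S (t, x) + (∑ k : Fin d, (pd k S (t, x)) ^ 2) / (2 * m)
          - (m * Λ ^ 2 / 2)
              * (lap (fun p => Real.sqrt (P p)) (t, x) / Real.sqrt (P (t, x)))
          + U x = 0
        ∧ tdiff P (t, x)
          + (∑ k : Fin d, pd k (fun p => P p * pd k S p / m) (t, x)) = 0) := by
  have polar_eq : ψ = polarWave (m * Λ) (fun p => √(P p)) S := by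
    funext p
    simp only [hψ, polarWave, ofReal_mul]
  have hS1 := hS.differentiable two_ne_zero
  have hP1 := hP.differentiable two_ne_zero
  rw [polar_eq]
  exact linear_schrodinger_iff_real_system_general hm.ne' hΛ (by fun_prop) (by fun_prop)
    (by fun_prop) (by fun_prop) (hPpos (t, x)) (U x)
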